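/- arXiv:2309.05039 — 2 statements merged into one kernel-verified Lean document; each statement's English description precedes it below -/
import Mathlib

section
/- Let p be an odd prime. Every closed subgroup G of Z_p^× is of the form G_fin × (1 + p^k Z_p) for a unique subgroup G_fin of the torsion subgroup μ_{p-1} and a unique k with 1 ≤ k ≤ ∞, where 1 + p^∞ Z_p is interpreted as the trivial group. -/
/-- The group `μ_{p-1}` of `(p-1)`-st roots of unity in `ℤ_[p]ˣ` (the torsion subgroup). -/
def muSubgroup (p : ℕ) [Fact p.Prime] : Subgroup ℤ_[p]ˣ where
  carrier := {x : ℤ_[p]ˣ | x ^ (p - 1) = 1}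
  one_mem' := one_pow _
  mul_mem' := by
    intro a b ha hb
    simp only [Set.mem_setOf_eq] at *
    rw [mul_pow, ha, hb, mul_one]
  inv_mem' := by
    intro a ha
    simp only [Set.mem_setOf_eq] at *
    rw [inv_pow, ha, inv_one]

/-- The subgroup `1 + p^k ℤ_p` of `ℤ_[p]ˣ`, as the kernel of reduction modulo `p^k`. -/
noncomputable def onePlusPPow (p : ℕ) [Fact p.Prime] (k : ℕ) : Subgroup ℤ_[p]ˣ :=
  MonoidHom.ker (Units.map (PadicInt.toZModPow (p := p) k).toMonoidHom)

/-- The subgroup `1 + p^k ℤ_p` for `k ∈ ℕ∞`, where `1 + p^∞ ℤ_p` is the trivial group. -/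
noncomputable def onePlusPPowE (p : ℕ) [Fact p.Prime] (k : ℕ∞) : Subgroup ℤ_[p]ˣ :=
  WithTop.recTopCoe ⊥ (fun n => onePlusPPow p n) k

/-!
Write `v(u) = v_p(u - 1)`, so that `1 + p^k ℤ_p = {u | k ≤ v(u)}` for every `k ≤ ∞`. For odd `p`,
lifting the exponent gives `v(u ^ p ^ j) = v(u) + j` as soon as `1 ≤ v(u)`. Hence in the cyclic
group `(ℤ/p^n)ˣ` the order of such a `u` is a power of `p` which decreases as `v(u)` grows, so
modulo every `p ^ n` the powers of `u` reach every `x` with `v(u) ≤ v(x)`. A closed group containing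
`u` therefore contains `1 + p^{v(u)} ℤ_p`, and `G ∩ (1 + p ℤ_p)` is `1 + p^k ℤ_p` for `k` the
minimum of `v` on it. On the other hand the root of unity congruent to `g ∈ G` modulo `p` is the
limit of `g ^ p ^ n`, so it lies in `G`; this splits off `G ∩ μ_{p-1}`.
-/

open Subgroup Topology

namespace PadicUnits

section General

theorem sup_inf_eq_left_of_disjoint {α : Type*} [Lattice α] [OrderBot α] [IsModularLattice α]
    {a b x y : α} (hab : Disjoint a b) (hx : x ≤ a) (hy : y ≤ b) : (x ⊔ y) ⊓ a = x := by
  rw [sup_inf_assoc_of_le y hx, (hab.symm.mono_left hy).eq_bot, sup_bot_eq]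

theorem mem_zpowers_iff_orderOf_dvd {C : Type*} [CommGroup C] [IsCyclic C] [Finite C] {x g : C} :
    x ∈ zpowers g ↔ orderOf x ∣ orderOf g := by
  have hle : zpowers g ≤ (powMonoidHom (orderOf g) : C →* C).ker := by
    rw [zpowers_le, MonoidHom.mem_ker, powMonoidHom_apply, pow_orderOf_eq_one]
  have hcard : Nat.card (powMonoidHom (orderOf g) : C →* C).ker ≤ Nat.card (zpowers g) := by
    rw [IsCyclic.card_powMonoidHom_ker, Nat.gcd_eq_right (orderOf_dvd_natCard g), Nat.card_zpowers]
  rw [eq_of_le_of_card_ge hle hcard, MonoidHom.mem_ker, powMonoidHom_apply,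
    orderOf_dvd_iff_pow_eq_one]

theorem mem_zpowers_sup_ker_iff_orderOf_dvd {A C : Type*} [Group A] [CommGroup C] [IsCyclic C]
    [Finite C] (f : A →* C) {x u : A} :
    x ∈ zpowers u ⊔ f.ker ↔ orderOf (f x) ∣ orderOf (f u) := by
  rw [← comap_map_eq, mem_comap, MonoidHom.map_zpowers, mem_zpowers_iff_orderOf_dvd]

open Polynomial in
theorem exists_pow_eq_one_sub_mem {R : Type*} [CommRing R] (I : Ideal R) [HenselianRing R I]
    {n : ℕ} (hn₀ : n ≠ 0) (hn : IsUnit (n : R)) {a : R} (ha : a ^ n - 1 ∈ I) :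
    ∃ ζ : Rˣ, ζ ^ n = 1 ∧ (ζ : R) - a ∈ I := by
  have ha_unit : IsUnit (Ideal.Quotient.mk I a) := by
    refine IsUnit.of_pow_eq_one ?_ hn₀
    rw [← map_pow, ← map_one (Ideal.Quotient.mk I), Ideal.Quotient.eq.2 ha]
  have hderiv : IsUnit (Ideal.Quotient.mk I ((X ^ n - C 1 : R[X]).derivative.eval a)) := by
    rw [derivative_sub, derivative_X_pow, derivative_C, sub_zero, eval_mul, eval_C, eval_X_pow,
      map_mul, map_pow]
    exact (hn.map (Ideal.Quotient.mk I)).mul (ha_unit.pow (n - 1))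
  obtain ⟨z, hz, hza⟩ := HenselianRing.is_henselian (X ^ n - C 1 : R[X])
    (monic_X_pow_sub_C 1 hn₀) a (by simpa using ha) hderiv
  have hz_pow : z ^ n = 1 := by simpa [sub_eq_zero] using hz
  exact ⟨Units.ofPowEqOne z n hz_pow hn₀, Units.pow_ofPowEqOne hz_pow hn₀, hza⟩

end General

variable {p : ℕ} [Fact p.Prime]

/-- The largest `k ≤ ∞` with `u ∈ 1 + p^k ℤ_p`, that is, the `p`-adic valuation of `u - 1`, with
value `⊤` at `u = 1`; it measures how close `u` is to `1`. -/
noncomputable def unitLevel (u : ℤ_[p]ˣ) : ℕ∞ := emultiplicity (p : ℤ_[p]) (u - 1)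

theorem mem_onePlusPPow_iff_le_unitLevel {n : ℕ} {u : ℤ_[p]ˣ} :
    u ∈ onePlusPPow p n ↔ (n : ℕ∞) ≤ unitLevel u := by
  rw [unitLevel, ← pow_dvd_iff_le_emultiplicity, ← Ideal.mem_span_singleton,
    ← PadicInt.ker_toZModPow, RingHom.mem_ker, map_sub, map_one, sub_eq_zero,
    onePlusPPow, MonoidHom.mem_ker, Units.ext_iff]
  rfl

theorem unitLevel_eq_top_iff {u : ℤ_[p]ˣ} : unitLevel u = ⊤ ↔ u = 1 := by
  refine ⟨fun h ↦ ?_, fun h ↦ by rw [h, unitLevel, Units.val_one, sub_self, emultiplicity_zero]⟩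
  by_contra hu
  exact emultiplicity_eq_top.1 h
    (.of_prime_left PadicInt.prime_p (sub_ne_zero.2 (Units.val_eq_one.not.2 hu)))

theorem mem_onePlusPPowE_iff_le_unitLevel {k : ℕ∞} {u : ℤ_[p]ˣ} :
    u ∈ onePlusPPowE p k ↔ k ≤ unitLevel u := by
  cases k with
  | top => rw [top_le_iff, unitLevel_eq_top_iff]; exact mem_bot
  | coe n => exact mem_onePlusPPow_iff_le_unitLevel

theorem exists_unitLevel_eq {k : ℕ∞} (hk : 1 ≤ k) : ∃ u : ℤ_[p]ˣ, unitLevel u = k := by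
  cases k with
  | top => exact ⟨1, unitLevel_eq_top_iff.2 rfl⟩
  | coe n =>
    have hn : n ≠ 0 := by rintro rfl; simp at hk
    obtain ⟨u, hu⟩ := IsLocalRing.isUnit_one_sub_self_of_mem_nonunits ((p : ℤ_[p]) ^ n)
      ((isUnit_pow_iff hn).not.2 PadicInt.prime_p.not_isUnit)
    refine ⟨u, ?_⟩
    rw [unitLevel, hu, sub_sub_cancel_left, emultiplicity_neg,
      emultiplicity_pow_self_of_prime PadicInt.prime_p]

theorem onePlusPPowE_le_iff {k l : ℕ∞} (hk : 1 ≤ k) :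
    onePlusPPowE p k ≤ onePlusPPowE p l ↔ l ≤ k := by
  refine ⟨fun h ↦ ?_, fun h u hu ↦ ?_⟩
  · obtain ⟨u, hu⟩ := exists_unitLevel_eq (p := p) hk
    rw [← hu]
    exact mem_onePlusPPowE_iff_le_unitLevel.1 (h (mem_onePlusPPowE_iff_le_unitLevel.2 hu.ge))
  · rw [mem_onePlusPPowE_iff_le_unitLevel] at hu ⊢
    exact h.trans hu

theorem onePlusPPowE_injOn : Set.InjOn (onePlusPPowE p) (Set.Ici 1) := fun _ hk _ hl h ↦
  le_antisymm ((onePlusPPowE_le_iff hl).1 h.ge) ((onePlusPPowE_le_iff hk).1 h.le)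

theorem unitLevel_pow_prime_pow (hp : Odd p) {u : ℤ_[p]ˣ} (hu : 1 ≤ unitLevel u) (j : ℕ) :
    unitLevel (u ^ p ^ j) = unitLevel u + j := by
  have h := emultiplicity_pow_prime_pow_sub_pow_prime_pow PadicInt.prime_p hp (x := (u : ℤ_[p]))
    (y := 1) (by simpa using pow_dvd_iff_le_emultiplicity.2 hu)
    (fun h ↦ PadicInt.prime_p.not_isUnit (isUnit_of_dvd_unit h u.isUnit)) j
  simpa [unitLevel] using h

theorem hasBasis_nhds_one_onePlusPPow :
    (𝓝 (1 : ℤ_[p]ˣ)).HasBasis (fun _ ↦ True) (fun n ↦ (onePlusPPow p n : Set ℤ_[p]ˣ)) := by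
  have hp_one_lt : (1 : ℝ) < p := mod_cast Nat.Prime.one_lt Fact.out
  rw [Units.isOpenEmbedding_val.isEmbedding.nhds_eq_comap]
  refine ((Metric.nhds_basis_closedBall_pow (inv_pos.2 (one_pos.trans hp_one_lt))
    (inv_lt_one_of_one_lt₀ hp_one_lt)).comap _).congr (fun _ ↦ Iff.rfl) fun n _ ↦ ?_
  ext u
  rw [Set.mem_preimage, mem_closedBall_iff_norm, inv_pow, ← zpow_natCast, ← zpow_neg,
    Units.val_one, PadicInt.norm_le_pow_iff_mem_span_pow, Ideal.mem_span_singleton,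
    pow_dvd_iff_le_emultiplicity, ← unitLevel, ← mem_onePlusPPow_iff_le_unitLevel, SetLike.mem_coe]

theorem isClosed_onePlusPPowE (k : ℕ∞) : IsClosed (onePlusPPowE p k : Set ℤ_[p]ˣ) := by
  cases k with
  | top => exact isClosed_singleton
  | coe n =>
    exact isClosed_of_isOpen _
      (isOpen_of_mem_nhds _ (hasBasis_nhds_one_onePlusPPow.mem_of_mem trivial))

theorem mem_of_isClosed_of_forall_mem_sup {G : Subgroup ℤ_[p]ˣ} (hG : IsClosed (G : Set ℤ_[p]ˣ))
    {x : ℤ_[p]ˣ} (hx : ∀ n, x ∈ G ⊔ onePlusPPow p n) : x ∈ G := by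
  rw [← SetLike.mem_coe, ← hG.closure_eq, mem_closure_iff_nhds_one]
  intro V hV
  obtain ⟨n, -, hn⟩ := hasBasis_nhds_one_onePlusPPow.mem_iff.1 hV
  obtain ⟨g, hg, u, hu, rfl⟩ := mem_sup.1 (hx n)
  exact ⟨g, hg, hn (by simpa using hu)⟩

theorem mem_zpowers_sup_onePlusPPow (hp : Odd p) {u x : ℤ_[p]ˣ} (hu : 1 ≤ unitLevel u)
    (hux : unitLevel u ≤ unitLevel x) (n : ℕ) : x ∈ zpowers u ⊔ onePlusPPow p n := by
  have : IsCyclic (ZMod (p ^ n))ˣ :=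
    ZMod.isCyclic_units_of_prime_pow p Fact.out (hp.ne_two_of_dvd_nat dvd_rfl) n
  let red : ℤ_[p]ˣ →* (ZMod (p ^ n))ˣ := Units.map (PadicInt.toZModPow n).toMonoidHom
  have red_pow_eq_one_iff {y : ℤ_[p]ˣ} (hy : 1 ≤ unitLevel y) (j : ℕ) :
      red y ^ p ^ j = 1 ↔ (n : ℕ∞) ≤ unitLevel y + j := by
    rw [← map_pow, ← unitLevel_pow_prime_pow hp hy, ← mem_onePlusPPow_iff_le_unitLevel]
    exact MonoidHom.mem_ker.symm
  refine (mem_zpowers_sup_ker_iff_orderOf_dvd red).2 ?_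
  obtain ⟨j, -, hj⟩ := (Nat.dvd_prime_pow Fact.out).1 <|
    orderOf_dvd_of_pow_eq_one ((red_pow_eq_one_iff hu n).2 le_add_self)
  have hn : (n : ℕ∞) ≤ unitLevel u + j :=
    (red_pow_eq_one_iff hu j).1 (hj ▸ pow_orderOf_eq_one (red u))
  rw [hj, orderOf_dvd_iff_pow_eq_one, red_pow_eq_one_iff (hu.trans hux)]
  exact hn.trans (by gcongr)

theorem onePlusPPowE_unitLevel_le (hp : Odd p) {G : Subgroup ℤ_[p]ˣ}
    (hG : IsClosed (G : Set ℤ_[p]ˣ)) {u : ℤ_[p]ˣ} (huG : u ∈ G) (hu : 1 ≤ unitLevel u) :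
    onePlusPPowE p (unitLevel u) ≤ G := fun _ hx ↦
  mem_of_isClosed_of_forall_mem_sup hG fun n ↦
    sup_le_sup_right (zpowers_le.2 huG) _ <|
      mem_zpowers_sup_onePlusPPow hp hu (mem_onePlusPPowE_iff_le_unitLevel.1 hx) n

theorem exists_eq_onePlusPPowE (hp : Odd p) {H : Subgroup ℤ_[p]ˣ} (hH : IsClosed (H : Set ℤ_[p]ˣ))
    (hH₁ : H ≤ onePlusPPowE p 1) : ∃ k : ℕ∞, 1 ≤ k ∧ H = onePlusPPowE p k := by
  obtain ⟨⟨u, huH⟩, hu_min⟩ := ENat.exists_eq_iInf (fun x : H ↦ unitLevel (x : ℤ_[p]ˣ))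
  have hu : 1 ≤ unitLevel u := mem_onePlusPPowE_iff_le_unitLevel.1 (hH₁ huH)
  refine ⟨_, hu, le_antisymm (fun x hx ↦ ?_) (onePlusPPowE_unitLevel_le hp hH huH hu)⟩
  rw [mem_onePlusPPowE_iff_le_unitLevel]
  exact hu_min.trans_le (iInf_le _ (⟨x, hx⟩ : H))

theorem pow_prime_pow_eq_self_of_mem_muSubgroup {w : ℤ_[p]ˣ} (hw : w ∈ muSubgroup p) (n : ℕ) :
    w ^ p ^ n = w := by
  have hdvd : p - 1 ∣ p ^ n - 1 := by simpa only [one_pow] using Nat.sub_dvd_pow_sub_pow p 1 n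
  have hw_pow : w ^ (p ^ n - 1) = 1 :=
    orderOf_dvd_iff_pow_eq_one.1 ((orderOf_dvd_of_pow_eq_one hw).trans hdvd)
  rw [← Nat.sub_add_cancel (Nat.one_le_pow n p (Nat.Prime.pos Fact.out)), pow_succ, hw_pow, one_mul]

theorem disjoint_muSubgroup_onePlusPPowE_one (hp : Odd p) :
    Disjoint (muSubgroup p) (onePlusPPowE p 1) := by
  rw [disjoint_def]
  intro u hu_mu hu
  rw [mem_onePlusPPowE_iff_le_unitLevel] at hu
  have hadd := unitLevel_pow_prime_pow hp hu 1
  rw [pow_prime_pow_eq_self_of_mem_muSubgroup hu_mu] at hadd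
  rw [← unitLevel_eq_top_iff]
  by_contra hfin
  exact ((ENat.lt_add_one_iff hfin).2 le_rfl).ne hadd

theorem exists_mem_muSubgroup_mul_inv_mem (u : ℤ_[p]ˣ) :
    ∃ w ∈ muSubgroup p, u * w⁻¹ ∈ onePlusPPowE p 1 := by
  have hfermat : (u : ℤ_[p]) ^ (p - 1) - 1 ∈ IsLocalRing.maximalIdeal ℤ_[p] := by
    rw [← PadicInt.ker_toZMod, RingHom.mem_ker, map_sub, map_pow, map_one, sub_eq_zero]
    exact ZMod.pow_card_sub_one_eq_one (u.isUnit.map PadicInt.toZMod).ne_zero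
  obtain ⟨w, hw, hwu⟩ := exists_pow_eq_one_sub_mem _
    (Nat.sub_ne_zero_of_lt (Nat.Prime.one_lt Fact.out))
    (PadicInt.isUnit_iff.2 PadicInt.norm_natCast_p_sub_one) hfermat
  refine ⟨w, hw, ?_⟩
  rw [PadicInt.maximalIdeal_eq_span_p, Ideal.mem_span_singleton, dvd_sub_comm] at hwu
  have hquot : ((u * w⁻¹ : ℤ_[p]ˣ) : ℤ_[p]) - 1 = (u - w) * (w⁻¹ : ℤ_[p]ˣ) := by
    rw [sub_mul, Units.mul_inv, Units.val_mul]
  rw [mem_onePlusPPowE_iff_le_unitLevel, unitLevel, hquot, ← Nat.cast_one,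
    ← pow_dvd_iff_le_emultiplicity, pow_one]
  exact hwu.mul_right _

theorem mem_of_mul_inv_mem_onePlusPPowE_one (hp : Odd p) {G : Subgroup ℤ_[p]ˣ}
    (hG : IsClosed (G : Set ℤ_[p]ˣ)) {g w : ℤ_[p]ˣ} (hg : g ∈ G) (hw : w ∈ muSubgroup p)
    (hgw : g * w⁻¹ ∈ onePlusPPowE p 1) : w ∈ G := by
  refine mem_of_isClosed_of_forall_mem_sup hG fun n ↦ ?_
  have hpow : g ^ p ^ n * w⁻¹ ∈ onePlusPPow p n := by
    rw [mem_onePlusPPowE_iff_le_unitLevel] at hgw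
    have h := unitLevel_pow_prime_pow hp hgw n
    rw [mul_pow, inv_pow, pow_prime_pow_eq_self_of_mem_muSubgroup hw] at h
    exact mem_onePlusPPow_iff_le_unitLevel.2 (h ▸ le_add_self)
  have hw_eq : w = g ^ p ^ n * (g ^ p ^ n * w⁻¹)⁻¹ := by simp
  rw [hw_eq]
  exact mul_mem_sup (pow_mem hg _) ((onePlusPPow p n).inv_mem hpow)

theorem inf_muSubgroup_sup_inf_onePlusPPowE_one (hp : Odd p) {G : Subgroup ℤ_[p]ˣ}
    (hG : IsClosed (G : Set ℤ_[p]ˣ)) : G ⊓ muSubgroup p ⊔ G ⊓ onePlusPPowE p 1 = G := by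
  refine le_antisymm (sup_le inf_le_left inf_le_left) fun g hg ↦ ?_
  obtain ⟨w, hw, hgw⟩ := exists_mem_muSubgroup_mul_inv_mem g
  have hwG : w ∈ G := mem_of_mul_inv_mem_onePlusPPowE_one hp hG hg hw hgw
  rw [show g = w * (g * w⁻¹) by rw [mul_comm, inv_mul_cancel_right]]
  exact mul_mem_sup ⟨hwG, hw⟩ ⟨G.mul_mem hg (G.inv_mem hwG), hgw⟩

end PadicUnits

open PadicUnits in
/-- For an odd prime `p`, every closed subgroup `G` of `ℤ_[p]ˣ` is of the form
`G_fin × (1 + p^k ℤ_p)` for a unique subgroup `G_fin` of the torsion subgroup `μ_{p-1}`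
and a unique `k` with `1 ≤ k ≤ ∞` (where `1 + p^∞ ℤ_p` means the trivial group). -/
theorem stmt_6 (p : ℕ) [Fact p.Prime] (hp : Odd p) (G : Subgroup ℤ_[p]ˣ)
    (hG : IsClosed (G : Set ℤ_[p]ˣ)) :
    ∃! hk : Subgroup ℤ_[p]ˣ × ℕ∞,
      hk.1 ≤ muSubgroup p ∧ 1 ≤ hk.2 ∧ G = hk.1 ⊔ onePlusPPowE p hk.2 := by
  have hdisj := disjoint_muSubgroup_onePlusPPowE_one hp
  have hU_closed : IsClosed (onePlusPPowE p 1 : Set ℤ_[p]ˣ) := isClosed_onePlusPPowE 1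
  obtain ⟨k, hk, hGk⟩ := exists_eq_onePlusPPowE hp (H := G ⊓ onePlusPPowE p 1)
    (hG.inter hU_closed) inf_le_right
  refine ⟨(G ⊓ muSubgroup p, k), ⟨inf_le_right, hk, ?_⟩, ?_⟩
  · rw [← hGk, inf_muSubgroup_sup_inf_onePlusPPowE_one hp hG]
  · rintro ⟨F, l⟩ ⟨hF, hl, rfl⟩
    have hlU : onePlusPPowE p l ≤ onePlusPPowE p 1 := (onePlusPPowE_le_iff hl).2 hl
    have hF_eq : (F ⊔ onePlusPPowE p l) ⊓ muSubgroup p = F :=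
      sup_inf_eq_left_of_disjoint hdisj hF hlU
    have hl_eq : (F ⊔ onePlusPPowE p l) ⊓ onePlusPPowE p 1 = onePlusPPowE p l := by
      rw [sup_comm, sup_inf_eq_left_of_disjoint hdisj.symm hlU hF]
    exact Prod.ext hF_eq.symm (onePlusPPowE_injOn hl hk (hl_eq.symm.trans hGk))
end

section
/- Let p be an odd prime and G an open subgroup of Z_p^×. Then there exists a prime number q whose image in Z_p^× topologically generates G. -/
/-!
For `k ≥ 1` and `p` odd, lifting the exponent shows that if `w - 1` has valuation exactly `k`, then
`w ^ p ^ j - 1` has valuation exactly `k + j`. For `n ≥ 1` the group `1 + p ^ (n + 1) ℤ_p` has index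
`p` in `1 + p ^ n ℤ_p`, so successive approximation by powers of `w` shows that `w` topologically
generates `1 + p ^ k ℤ_p`. Hence, if `G` contains `1 + p ^ k ℤ_p`, an element `u` of `G`
topologically generates `G` as soon as it generates `G` modulo `p ^ (k + 1)`: some power of `u` is
congruent to `1 + p ^ k` modulo `p ^ (k + 1)`. As `(ℤ / p ^ (k + 1))ˣ` is cyclic, `G` has a
generator modulo `p ^ (k + 1)`, and Dirichlet's theorem provides a prime in its residue class.
-/

open Filter Subgroup Topology

section Group

variable {G G' : Type*} [Group G] [Group G']

theorem exists_mem_le_zpowers_sup_ker [IsCyclic G'] (f : G →* G') (H : Subgroup G) :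
    ∃ a ∈ H, H ≤ zpowers a ⊔ f.ker := by
  obtain ⟨⟨_, a, ha, rfl⟩, hgen⟩ := IsCyclic.exists_generator (α := H.map f)
  refine ⟨a, ha, map_le_map_iff.1 ?_⟩
  rintro _ ⟨g, hg, rfl⟩
  obtain ⟨c, hc⟩ := hgen ⟨f g, g, hg, rfl⟩
  exact ⟨a ^ c, zpow_mem_zpowers a c, by simpa using congrArg Subtype.val hc⟩

theorem zpowers_le_zpowers_sup {N : Subgroup G} {a b : G} (h : b⁻¹ * a ∈ N) :
    zpowers a ≤ zpowers b ⊔ N := by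
  rw [zpowers_le, ← mul_inv_cancel_left b a]
  exact mul_mem_sup (mem_zpowers b) h

theorem le_topologicalClosure_of_forall_le_sup [TopologicalSpace G] [IsTopologicalGroup G]
    {ι : Sort*} {N : ι → Subgroup G} [∀ i, (N i).Normal]
    (hN : (𝓝 (1 : G)).HasBasis (fun _ ↦ True) fun i ↦ (N i : Set G)) {H K : Subgroup G}
    (h : ∀ i, K ≤ H ⊔ N i) : K ≤ H.topologicalClosure := by
  intro g hg
  rw [← SetLike.mem_coe, topologicalClosure_coe, mem_closure_iff_nhds_basis (hN.nhds_of_one g)]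
  intro i _
  obtain ⟨n, hn, x, hx, rfl⟩ := mem_sup_of_normal_left.1 (sup_comm H (N i) ▸ h i hg)
  exact ⟨x, hx, by simpa using hn⟩

end Group

variable {p : ℕ} [Fact p.Prime]

variable (p) in
/-- The `n`-th higher unit group `1 + p ^ n ℤ_p` of `ℤ_p` (all of `ℤ_pˣ` for `n = 0`), encoded as
the kernel of reduction modulo `p ^ n`. -/
noncomputable def higherUnits (n : ℕ) : Subgroup ℤ_[p]ˣ :=
  (Units.map (PadicInt.toZModPow (p := p) n : ℤ_[p] →* ZMod (p ^ n))).ker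

theorem toZModPow_eq_iff_dvd_sub {n : ℕ} {x y : ℤ_[p]} :
    PadicInt.toZModPow n x = PadicInt.toZModPow n y ↔ (p : ℤ_[p]) ^ n ∣ x - y := by
  rw [← Ideal.mem_span_singleton, ← PadicInt.ker_toZModPow, RingHom.mem_ker, map_sub, sub_eq_zero]

theorem inv_mul_mem_higherUnits_iff {n : ℕ} {x y : ℤ_[p]ˣ} :
    x⁻¹ * y ∈ higherUnits p n ↔ (p : ℤ_[p]) ^ n ∣ (y : ℤ_[p]) - x := by
  rw [higherUnits, ← MonoidHom.eq_iff, Units.ext_iff, ← toZModPow_eq_iff_dvd_sub]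
  rfl

theorem mem_higherUnits_iff {n : ℕ} {x : ℤ_[p]ˣ} :
    x ∈ higherUnits p n ↔ (p : ℤ_[p]) ^ n ∣ (x : ℤ_[p]) - 1 := by
  simpa using inv_mul_mem_higherUnits_iff (n := n) (x := 1) (y := x)

theorem higherUnits_antitone : Antitone (higherUnits p) := fun _ _ hmn _ hx ↦
  mem_higherUnits_iff.2 ((pow_dvd_pow _ hmn).trans (mem_higherUnits_iff.1 hx))

theorem hasBasis_nhds_one_higherUnits :
    (𝓝 (1 : ℤ_[p]ˣ)).HasBasis (fun _ ↦ True) fun n ↦ (higherUnits p n : Set ℤ_[p]ˣ) := by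
  have hp1 : (1 : ℝ) < p := mod_cast (Fact.out : p.Prime).one_lt
  have hball := Metric.nhds_basis_closedBall_pow (x := (1 : ℤ_[p])) (r := (p : ℝ)⁻¹)
    (by positivity) (inv_lt_one_of_one_lt₀ hp1)
  rw [Units.isOpenEmbedding_val.nhds_eq_comap, Units.val_one]
  refine (hball.comap _).congr (fun _ ↦ Iff.rfl) fun n _ ↦ ?_
  ext x
  rw [SetLike.mem_coe, mem_higherUnits_iff, Set.mem_preimage, mem_closedBall_iff_norm,
    ← Ideal.mem_span_singleton, ← PadicInt.norm_le_pow_iff_mem_span_pow, zpow_neg, zpow_natCast,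
    inv_pow]

theorem isUnit_of_not_prime_dvd {x : ℤ_[p]} (hx : ¬(p : ℤ_[p]) ∣ x) : IsUnit x := by
  rwa [← not_not (a := IsUnit x), PadicInt.not_isUnit_iff, PadicInt.norm_lt_one_iff_dvd]

theorem exists_prime_dvd_sub_natCast_mul (s : ℤ_[p]) {t : ℤ_[p]} (ht : ¬(p : ℤ_[p]) ∣ t) :
    ∃ c : ℕ, (p : ℤ_[p]) ∣ s - c * t := by
  obtain ⟨r, rfl⟩ := (isUnit_of_not_prime_dvd ht).dvd (a := s)
  have hmem := PadicInt.sub_zmodRepr_mem r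
  rw [PadicInt.maximalIdeal_eq_span_p, Ideal.mem_span_singleton] at hmem
  refine ⟨r.zmodRepr, ?_⟩
  rw [mul_comm t, ← sub_mul]
  exact hmem.mul_right t

theorem exists_emultiplicity_sub_one_eq {k : ℕ} (hk : k ≠ 0) :
    ∃ v : ℤ_[p]ˣ, emultiplicity (p : ℤ_[p]) (v - 1) = k := by
  have hv : IsUnit (1 + (p : ℤ_[p]) ^ k) := isUnit_of_not_prime_dvd fun h ↦
    PadicInt.prime_p.not_dvd_one ((dvd_add_left (dvd_pow_self _ hk)).1 h)
  obtain ⟨v, hv⟩ := hv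
  refine ⟨v, ?_⟩
  rw [hv, add_sub_cancel_left]
  exact emultiplicity_pow_self_of_prime PadicInt.prime_p k

theorem emultiplicity_sub_one_eq_iff {k : ℕ} {w : ℤ_[p]ˣ} :
    emultiplicity (p : ℤ_[p]) (w - 1) = k ↔ w ∈ higherUnits p k ∧ w ∉ higherUnits p (k + 1) := by
  rw [emultiplicity_eq_coe, mem_higherUnits_iff, mem_higherUnits_iff]

theorem emultiplicity_pow_prime_pow_sub_one (hp : Odd p) {w : ℤ_[p]ˣ}
    (hw : (p : ℤ_[p]) ∣ w - 1) (j : ℕ) :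
    emultiplicity (p : ℤ_[p]) (↑(w ^ p ^ j) - 1) = emultiplicity (p : ℤ_[p]) (w - 1) + j := by
  have hpw : ¬(p : ℤ_[p]) ∣ w := fun h ↦ PadicInt.prime_p.not_isUnit (isUnit_of_dvd_unit h w.isUnit)
  simpa using emultiplicity_pow_prime_pow_sub_pow_prime_pow PadicInt.prime_p hp hw hpw j

theorem higherUnits_le_zpowers_sup_succ {m : ℕ} (hm : m ≠ 0) {w : ℤ_[p]ˣ}
    (hw : emultiplicity (p : ℤ_[p]) (w - 1) = m) :
    higherUnits p m ≤ zpowers w ⊔ higherUnits p (m + 1) := by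
  intro g hg
  obtain ⟨t, ht, hpt⟩ :=
    (finiteMultiplicity_of_emultiplicity_eq_natCast hw).exists_eq_pow_mul_and_not_dvd
  rw [multiplicity_eq_of_emultiplicity_eq_some hw] at ht
  obtain ⟨s, hs⟩ := mem_higherUnits_iff.1 hg
  obtain ⟨c, hc⟩ := exists_prime_dvd_sub_natCast_mul s hpt
  have hlin : (p : ℤ_[p]) ^ (m + 1) ∣ ((g : ℤ_[p]) - 1) - c * (w - 1) := by
    rw [hs, ht, mul_left_comm, ← mul_sub, pow_succ]
    exact mul_dvd_mul_left _ hc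
  have hquad : (p : ℤ_[p]) ^ (m + 1) ∣ (w : ℤ_[p]) ^ c - 1 - c * (w - 1) :=
    calc (p : ℤ_[p]) ^ (m + 1)
      _ ∣ (p ^ m) ^ 2 := by rw [← pow_mul]; exact pow_dvd_pow _ (by lia)
      _ ∣ (w - 1) ^ 2 := pow_dvd_pow_of_dvd (pow_dvd_of_le_emultiplicity hw.ge) 2
      _ ∣ w ^ c - 1 - c * (w - 1) := by
        convert! sq_dvd_add_pow_sub_sub ((w : ℤ_[p]) - 1) 1 c using 1
        ring
  have hgw : (w ^ c)⁻¹ * g ∈ higherUnits p (m + 1) := by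
    rw [inv_mul_mem_higherUnits_iff, Units.val_pow_eq_pow_val]
    convert! dvd_sub hlin hquad using 1
    ring
  rw [← mul_inv_cancel_left (w ^ c) g]
  exact mul_mem_sup (npow_mem_zpowers w c) hgw

theorem higherUnits_le_zpowers_sup (hp : Odd p) {k : ℕ} (hk : k ≠ 0) {w : ℤ_[p]ˣ}
    (hw : emultiplicity (p : ℤ_[p]) (w - 1) = k) (j : ℕ) :
    higherUnits p k ≤ zpowers w ⊔ higherUnits p (k + j) := by
  induction j with
  | zero => exact le_sup_right
  | succ j ih =>
    have hpw : (p : ℤ_[p]) ∣ w - 1 :=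
      (dvd_pow_self _ hk).trans (pow_dvd_of_le_emultiplicity hw.ge)
    have hwj : emultiplicity (p : ℤ_[p]) (↑(w ^ p ^ j) - 1) = ↑(k + j) := by
      rw [emultiplicity_pow_prime_pow_sub_one hp hpw, hw, Nat.cast_add]
    calc higherUnits p k
      _ ≤ zpowers w ⊔ higherUnits p (k + j) := ih
      _ ≤ zpowers w ⊔ (zpowers (w ^ p ^ j) ⊔ higherUnits p (k + j + 1)) :=
        sup_le_sup_left (higherUnits_le_zpowers_sup_succ (by lia) hwj) _
      _ ≤ zpowers w ⊔ higherUnits p (k + j + 1) :=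
        sup_le le_sup_left (sup_le_sup_right (zpowers_le.2 (npow_mem_zpowers w _)) _)

theorem higherUnits_le_topologicalClosure_zpowers (hp : Odd p) {k : ℕ} (hk : k ≠ 0) {w : ℤ_[p]ˣ}
    (hw : emultiplicity (p : ℤ_[p]) (w - 1) = k) :
    higherUnits p k ≤ (zpowers w).topologicalClosure :=
  le_topologicalClosure_of_forall_le_sup hasBasis_nhds_one_higherUnits fun n ↦
    (higherUnits_le_zpowers_sup hp hk hw n).trans
      (sup_le_sup_left (higherUnits_antitone (Nat.le_add_left n k)) _)

theorem exists_mem_zpowers_emultiplicity_sub_one_eq {k : ℕ} (hk : k ≠ 0) {u : ℤ_[p]ˣ}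
    (hu : higherUnits p k ≤ zpowers u ⊔ higherUnits p (k + 1)) :
    ∃ w ∈ zpowers u, emultiplicity (p : ℤ_[p]) (w - 1) = k := by
  obtain ⟨v, hv⟩ := exists_emultiplicity_sub_one_eq (p := p) hk
  simp only [emultiplicity_sub_one_eq_iff] at hv ⊢
  obtain ⟨w, hw, z, hz, rfl⟩ := mem_sup.1 (hu hv.1)
  have hzk : z ∈ higherUnits p k := higherUnits_antitone k.le_succ hz
  exact ⟨w, hw, (mul_mem_cancel_right hzk).1 hv.1, fun h ↦ hv.2 (mul_mem h hz)⟩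

theorem topologicalClosure_zpowers_eq_of_le_sup (hp : Odd p) {k : ℕ} (hk : k ≠ 0)
    {G : Subgroup ℤ_[p]ˣ} (hkG : higherUnits p k ≤ G) {u : ℤ_[p]ˣ} (huG : u ∈ G)
    (hu : G ≤ zpowers u ⊔ higherUnits p (k + 1)) : (zpowers u).topologicalClosure = G := by
  have hG : IsOpen (G : Set ℤ_[p]ˣ) :=
    G.isOpen_of_mem_nhds (mem_of_superset (hasBasis_nhds_one_higherUnits.mem_of_mem trivial) hkG)
  obtain ⟨w, hwu, hw⟩ := exists_mem_zpowers_emultiplicity_sub_one_eq hk (hkG.trans hu)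
  have hku : higherUnits p k ≤ (zpowers u).topologicalClosure :=
    (higherUnits_le_topologicalClosure_zpowers hp hk hw).trans
      (topologicalClosure_mono (zpowers_le.2 hwu))
  refine le_antisymm ?_ (hu.trans (sup_le (le_topologicalClosure _) ?_))
  · exact topologicalClosure_minimal _ (zpowers_le.2 huG) (G.isClosed_of_isOpen hG)
  · exact (higherUnits_antitone k.le_succ).trans hku

theorem exists_higherUnits_le_of_isOpen {G : Subgroup ℤ_[p]ˣ} (hG : IsOpen (G : Set ℤ_[p]ˣ)) :
    ∃ k ≠ 0, higherUnits p k ≤ G := by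
  obtain ⟨k, -, hk⟩ := hasBasis_nhds_one_higherUnits.mem_iff.1 (hG.mem_nhds G.one_mem)
  exact ⟨k + 1, k.succ_ne_zero, (higherUnits_antitone k.le_succ).trans hk⟩

theorem exists_mem_le_zpowers_sup_higherUnits (hp : Odd p) (G : Subgroup ℤ_[p]ˣ) (n : ℕ) :
    ∃ a ∈ G, G ≤ zpowers a ⊔ higherUnits p n :=
  have := ZMod.isCyclic_units_of_prime_pow p Fact.out (hp.ne_two_of_dvd_nat dvd_rfl) n
  exists_mem_le_zpowers_sup_ker _ G

theorem exists_prime_eq_inv_mul_mem_higherUnits (n : ℕ) (a : ℤ_[p]ˣ) :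
    ∃ q : ℕ, q.Prime ∧ ∃ u : ℤ_[p]ˣ, (u : ℤ_[p]) = q ∧ u⁻¹ * a ∈ higherUnits p n := by
  have hpp : p.Prime := Fact.out
  have : NeZero (p ^ n) := ⟨pow_ne_zero n hpp.ne_zero⟩
  obtain ⟨q, hpq, hq, hqa⟩ := Nat.forall_exists_prime_gt_and_eq_mod
    (a.isUnit.map (PadicInt.toZModPow n)) p
  have hqu : IsUnit (q : ℤ_[p]) := by
    rw [PadicInt.isUnit_iff, PadicInt.norm_natCast_eq_one_iff]
    exact (Nat.coprime_primes hpp hq).2 hpq.ne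
  refine ⟨q, hq, hqu.unit, hqu.unit_spec, ?_⟩
  rw [inv_mul_mem_higherUnits_iff, ← toZModPow_eq_iff_dvd_sub, hqu.unit_spec, map_natCast, hqa]

/-- For an odd prime `p` and an open subgroup `G` of `ℤ_[p]ˣ`, there exists a prime
number `q` whose image in `ℤ_[p]ˣ` topologically generates `G`. -/
theorem stmt_7 (p : ℕ) [Fact p.Prime] (hp : Odd p) (G : Subgroup ℤ_[p]ˣ)
    (hG : IsOpen (G : Set ℤ_[p]ˣ)) :
    ∃ q : ℕ, q.Prime ∧ ∃ u : ℤ_[p]ˣ, (u : ℤ_[p]) = (q : ℤ_[p]) ∧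
      (Subgroup.closure {u}).topologicalClosure = G := by
  obtain ⟨k, hk, hkG⟩ := exists_higherUnits_le_of_isOpen hG
  obtain ⟨a, haG, ha⟩ := exists_mem_le_zpowers_sup_higherUnits hp G (k + 1)
  obtain ⟨q, hq, u, huq, hua⟩ := exists_prime_eq_inv_mul_mem_higherUnits (k + 1) a
  have huG : u ∈ G := by
    have huaG : u⁻¹ * a ∈ G := hkG (higherUnits_antitone k.le_succ hua)
    simpa using (mul_mem_cancel_right haG).1 huaG
  have hu : G ≤ zpowers u ⊔ higherUnits p (k + 1) :=
    ha.trans (sup_le (zpowers_le_zpowers_sup hua) le_sup_right)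
  refine ⟨q, hq, u, huq, ?_⟩
  rw [← zpowers_eq_closure]
  exact topologicalClosure_zpowers_eq_of_le_sup hp hk hkG huG hu
end
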